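/- Let t ≥ 4 and n ∈ {2^t-2, 2^t-1, 2^t, 2^t+1}. Then w_2^{2^t-4} ∉ I_{n,4} and w_2^{2^t-3} ∈ I_{n,4}; that is, the image of w_2 in the quotient ring F_2[w_2,w_3,w_4]/I_{n,4} has height exactly 2^t-4. (This expresses that the height of the Stiefel–Whitney class w̃_2 in H^*(G̃_{n,4}; F_2) equals 2^t-4.) -/

import Mathlib

open MvPolynomial

/-- The polynomials `g_r = g_r^{(4)}` in `F_2[w_2,w_3,w_4]` (variables `X 0 = w_2`,
`X 1 = w_3`, `X 2 = w_4`): `g_0 = 1`, `g_r = 0` for `r < 0`, and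
`g_r = w_2·g_{r-2} + w_3·g_{r-3} + w_4·g_{r-4}` for `r ≥ 1`. -/
noncomputable def g4 : ℤ → MvPolynomial (Fin 3) (ZMod 2)
  | r =>
    if r ≤ 0 then (if r = 0 then 1 else 0)
    else X 0 * g4 (r - 2) + X 1 * g4 (r - 3) + X 2 * g4 (r - 4)
  termination_by r => r.toNat
  decreasing_by all_goals omega

/-- The ideal `I_{n,4} = (g_{n-3}, g_{n-2}, g_{n-1}, g_n)` of `F_2[w_2,w_3,w_4]`. -/
noncomputable def I4 (n : ℤ) : Ideal (MvPolynomial (Fin 3) (ZMod 2)) :=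
  Ideal.span {g4 (n - 3), g4 (n - 2), g4 (n - 1), g4 n}

abbrev RR := MvPolynomial (Fin 3) (ZMod 2)

theorem g4_rec (r : ℤ) (h : 0 < r) :
    g4 r = X 0 * g4 (r - 2) + X 1 * g4 (r - 3) + X 2 * g4 (r - 4) := by
  rw [g4, if_neg (by omega)]

theorem g4_neg (r : ℤ) (h : r < 0) : g4 r = 0 := by
  rw [g4, if_pos (by omega), if_neg (by omega)]

theorem g4_zero : g4 0 = 1 := by
  rw [g4]; simp

theorem two_RR : (2 : RR) = 0 := CharTwo.two_eq_zero

theorem dbl (m : ℕ) : ∀ r : ℤ, r < m →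
    g4 (2 * r) = g4 r ^ 2 + X 0 * g4 (r - 1) ^ 2 + X 2 * g4 (r - 2) ^ 2 ∧
    g4 (2 * r + 1) = X 1 * g4 (r - 1) ^ 2 := by
  induction m with
  | zero =>
    intro r hr
    have hr : r < 0 := by simpa using hr
    rw [g4_neg (2 * r) (by omega), g4_neg (2 * r + 1) (by omega), g4_neg r (by omega),
      g4_neg (r - 1) (by omega), g4_neg (r - 2) (by omega)]
    simp
  | succ m ih =>
    intro r hr
    push_cast at hr
    by_cases h0 : r < 0
    · exact ih r (by omega)
    have e1 := ih (r - 1) (by omega)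
    have e2 := ih (r - 2) (by omega)
    rw [show 2 * (r - 1) = 2 * r - 2 by ring, show r - 1 - 1 = r - 2 by ring,
      show r - 1 - 2 = r - 3 by ring, show 2 * r - 2 + 1 = 2 * r - 1 by ring] at e1
    rw [show 2 * (r - 2) = 2 * r - 4 by ring, show r - 2 - 1 = r - 3 by ring,
      show r - 2 - 2 = r - 4 by ring, show 2 * r - 4 + 1 = 2 * r - 3 by ring] at e2
    constructor
    · rcases eq_or_lt_of_le (not_lt.mp h0) with h | h
      · subst h
        simp [g4_zero, g4_neg]
      · rw [g4_rec (2 * r) (by omega), e1.1, e2.1, e2.2, g4_rec r h]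
        linear_combination (X 0 * X 2 * g4 (r - 3) ^ 2 - X 0 * g4 (r - 2) * X 1 * g4 (r - 3)
          - X 0 * g4 (r - 2) * X 2 * g4 (r - 4) - X 1 * g4 (r - 3) * X 2 * g4 (r - 4)) * two_RR
    · rw [g4_rec (2 * r + 1) (by omega), show 2 * r + 1 - 2 = 2 * r - 1 by ring,
        show 2 * r + 1 - 3 = 2 * r - 2 by ring, show 2 * r + 1 - 4 = 2 * r - 3 by ring,
        e1.1, e1.2, e2.2]
      linear_combination (X 0 * X 1 * g4 (r - 2) ^ 2 + X 2 * X 1 * g4 (r - 3) ^ 2) * two_RR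

theorem dbl0 (r : ℤ) :
    g4 (2 * r) = g4 r ^ 2 + X 0 * g4 (r - 1) ^ 2 + X 2 * g4 (r - 2) ^ 2 :=
  (dbl (r.toNat + 1) r (by omega)).1

theorem dbl1 (r : ℤ) : g4 (2 * r + 1) = X 1 * g4 (r - 1) ^ 2 :=
  (dbl (r.toNat + 1) r (by omega)).2

noncomputable def qa (k : ℕ) : RR := g4 (2 ^ (k + 1) - 2)
noncomputable def qb (k : ℕ) : RR := g4 (2 ^ (k + 1) - 1)
noncomputable def qc (k : ℕ) : RR := g4 (2 ^ (k + 1) - 4)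

theorem qz (k : ℕ) : g4 (2 ^ (k + 1) - 3) = 0 := by
  induction k with
  | zero => exact g4_neg _ (by norm_num)
  | succ k ih =>
    have := dbl1 (2 ^ (k + 1) - 2)
    rw [show (2 * (2 ^ (k + 1) - 2) + 1 : ℤ) = 2 ^ (k + 1 + 1) - 3 by ring,
      show (2 ^ (k + 1) - 2 - 1 : ℤ) = 2 ^ (k + 1) - 3 by ring, ih] at this
    rw [this]; simp

theorem qa_zero : qa 0 = 1 := by simp [qa, g4_zero]
theorem qb_zero : qb 0 = 0 := by
  have := dbl1 0
  simpa [qb, g4_neg] using this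
theorem qc_one : qc 1 = 1 := by
  rw [qc]; norm_num [g4_zero]

theorem qa_succ (k : ℕ) : qa (k + 1) = qb k ^ 2 + X 0 * qa k ^ 2 := by
  have := dbl0 (2 ^ (k + 1) - 1)
  rw [show (2 * (2 ^ (k + 1) - 1) : ℤ) = 2 ^ (k + 1 + 1) - 2 by ring,
      show (2 ^ (k + 1) - 1 - 1 : ℤ) = 2 ^ (k + 1) - 2 by ring,
      show (2 ^ (k + 1) - 1 - 2 : ℤ) = 2 ^ (k + 1) - 3 by ring, qz] at this
  rw [qa, this, qa, qb]; ring

theorem qb_succ (k : ℕ) : qb (k + 1) = X 1 * qa k ^ 2 := by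
  have := dbl1 (2 ^ (k + 1) - 1)
  rw [show (2 * (2 ^ (k + 1) - 1) + 1 : ℤ) = 2 ^ (k + 1 + 1) - 1 by ring,
      show (2 ^ (k + 1) - 1 - 1 : ℤ) = 2 ^ (k + 1) - 2 by ring] at this
  rw [qb, this, qa]

theorem qc_succ (k : ℕ) : qc (k + 1) = qa k ^ 2 + X 2 * qc k ^ 2 := by
  have := dbl0 (2 ^ (k + 1) - 2)
  rw [show (2 * (2 ^ (k + 1) - 2) : ℤ) = 2 ^ (k + 1 + 1) - 4 by ring,
      show (2 ^ (k + 1) - 2 - 1 : ℤ) = 2 ^ (k + 1) - 3 by ring,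
      show (2 ^ (k + 1) - 2 - 2 : ℤ) = 2 ^ (k + 1) - 4 by ring, qz] at this
  rw [qc, this, qa, qc]; ring

/-- Ideal of monomials of weight at least `d` with exponent of `w_3` at least `e`. -/
noncomputable def W (e d : ℕ) : Ideal RR :=
  Ideal.span {f | ∃ i j : ℕ, e ≤ j ∧ d ≤ 2 * i + 3 * j ∧ f = X 0 ^ i * X 1 ^ j}

theorem W_mem {e d : ℕ} (i j : ℕ) (h : e ≤ j) (h' : d ≤ 2 * i + 3 * j) :
    (X 0 ^ i * X 1 ^ j : RR) ∈ W e d := Ideal.subset_span ⟨i, j, h, h', rfl⟩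

theorem W_mul {e d : ℕ} (p q : ℕ) (I : Ideal RR)
    (H : ∀ i j : ℕ, e ≤ j → d ≤ 2 * i + 3 * j → (X 0 ^ (p + i) * X 1 ^ (q + j) : RR) ∈ I)
    {f : RR} (hf : f ∈ W e d) : X 0 ^ p * X 1 ^ q * f ∈ I := by
  refine Submodule.span_induction ?_ ?_ ?_ ?_ hf
  · rintro _ ⟨i, j, h, h', rfl⟩
    convert H i j h h' using 1
    ring
  · simp
  · intro f g _ _ hf hg
    rw [mul_add]; exact I.add_mem hf hg
  · intro r f _ hf
    rw [smul_eq_mul, mul_left_comm]; exact I.mul_mem_left _ hf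

theorem W_sq {e d : ℕ} (p q : ℕ) (I : Ideal RR)
    (H : ∀ i j : ℕ, e ≤ j → d ≤ 2 * i + 3 * j → (X 0 ^ (p + 2 * i) * X 1 ^ (q + 2 * j) : RR) ∈ I)
    {f : RR} (hf : f ∈ W e d) : X 0 ^ p * X 1 ^ q * f ^ 2 ∈ I := by
  refine Submodule.span_induction ?_ ?_ ?_ ?_ hf
  · rintro _ ⟨i, j, h, h', rfl⟩
    convert H i j h h' using 1
    ring
  · simp
  · intro f g _ _ hf hg
    rw [CharTwo.add_sq, mul_add]; exact I.add_mem hf hg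
  · intro r f _ hf
    rw [smul_eq_mul, mul_pow, mul_left_comm]; exact I.mul_mem_left _ hf

theorem lead (k : ℕ) : qa k + X 0 ^ (2 ^ k - 1) ∈ W 1 (2 ^ (k + 1) - 2) ∧
    qb k ∈ W 1 (2 ^ (k + 1) - 1) := by
  induction k with
  | zero =>
    rw [qa_zero, qb_zero]
    simp [CharTwo.add_self_eq_zero]
  | succ k ih =>
    obtain ⟨h1, h2⟩ := ih
    have hp : 1 ≤ 2 ^ k := Nat.one_le_two_pow
    have e1 : 2 ^ (k + 1) = 2 * 2 ^ k := by ring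
    have e2 : 2 ^ (k + 1 + 1) = 4 * 2 ^ k := by ring
    have ha : qa k ∈ W 0 (2 ^ (k + 1) - 2) := by
      have : qa k = (X 0 ^ 0 * X 1 ^ 0 * (qa k + X 0 ^ (2 ^ k - 1)))
          + X 0 ^ (2 ^ k - 1) * X 1 ^ 0 := by
        linear_combination (- X 0 ^ (2 ^ k - 1)) * two_RR
      rw [this]
      refine Ideal.add_mem _ (W_mul 0 0 _ ?_ h1) (W_mem _ _ (by omega) (by omega))
      intro i j _ _
      exact W_mem _ _ (by omega) (by omega)
    constructor
    · have : qa (k + 1) + X 0 ^ (2 ^ (k + 1) - 1) = X 0 ^ 0 * X 1 ^ 0 * qb k ^ 2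
          + X 0 ^ 1 * X 1 ^ 0 * (qa k + X 0 ^ (2 ^ k - 1)) ^ 2 := by
        rw [qa_succ, CharTwo.add_sq, show 2 ^ (k + 1) - 1 = 1 + (2 ^ k - 1) * 2 by omega,
          pow_add, pow_mul]
        ring
      rw [this]
      refine Ideal.add_mem _ (W_sq 0 0 _ ?_ h2) (W_sq 1 0 _ ?_ h1)
      · intro i j _ _
        exact W_mem _ _ (by omega) (by omega)
      · intro i j _ _
        exact W_mem _ _ (by omega) (by omega)
    · rw [qb_succ, show X 1 * qa k ^ 2 = X 0 ^ 0 * X 1 ^ 1 * qa k ^ 2 by ring]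
      refine W_sq 0 1 _ ?_ ha
      intro i j _ _
      exact W_mem _ _ (by omega) (by omega)

noncomputable def J (k : ℕ) : Ideal RR := Ideal.span {qa k, qb k}

theorem big_mem (k : ℕ) : ∀ i j : ℕ, 2 * 2 ^ (k + 1) ≤ 2 * i + 3 * j + 7 →
    (X 0 ^ i * X 1 ^ j : RR) ∈ J k := by
  induction k with
  | zero =>
    intro i j _
    have : J 0 = ⊤ := by
      rw [Ideal.eq_top_iff_one]
      exact Ideal.subset_span (by simp [qa_zero])
    rw [this]; trivial
  | succ k ih =>
    have hp : 1 ≤ 2 ^ k := Nat.one_le_two_pow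
    have e1 : 2 ^ (k + 1) = 2 * 2 ^ k := by ring
    have e2 : 2 ^ (k + 1 + 1) = 4 * 2 ^ k := by ring
    have ma : qa (k + 1) ∈ J (k + 1) := Ideal.subset_span (by simp)
    have mb : qb (k + 1) ∈ J (k + 1) := Ideal.subset_span (by simp)
    have key : ∀ i j : ℕ, 1 ≤ j → 2 * 2 ^ (k + 1 + 1) ≤ 2 * i + 3 * j + 7 →
        (X 0 ^ i * X 1 ^ j : RR) ∈ J (k + 1) := by
      intro i j hj h
      have hr := ih (i / 2) ((j - 1) / 2) (by omega)
      obtain ⟨p, q, hpq⟩ := Ideal.mem_span_pair.mp hr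
      have : (X 0 ^ i * X 1 ^ j : RR) = X 0 ^ (i % 2) * X 1 ^ ((j - 1) % 2) *
          (p ^ 2 * qb (k + 1) + q ^ 2 * (X 1 * qa (k + 1) - X 0 * qb (k + 1))) := by
        have hi : i = i % 2 + (i / 2) * 2 := by omega
        have hj' : j = (j - 1) % 2 + ((j - 1) / 2) * 2 + 1 := by omega
        have hs : p ^ 2 * qb (k + 1) + q ^ 2 * (X 1 * qa (k + 1) - X 0 * qb (k + 1))
            = X 1 * (X 0 ^ (i / 2) * X 1 ^ ((j - 1) / 2)) ^ 2 := by
          rw [← hpq, CharTwo.add_sq, qa_succ, qb_succ]; ring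
        rw [hs]
        conv_lhs => rw [hi, hj']
        ring
      rw [this]
      refine Ideal.mul_mem_left _ _ (Ideal.add_mem _ (Ideal.mul_mem_left _ _ mb)
        (Ideal.mul_mem_left _ _ (Ideal.sub_mem _ (Ideal.mul_mem_left _ _ ma)
        (Ideal.mul_mem_left _ _ mb))))
    intro i j h
    rcases Nat.eq_zero_or_pos j with hj | hj
    · subst hj
      obtain ⟨m, hm⟩ : ∃ m, i = m + (2 ^ (k + 1) - 1) := ⟨i - (2 ^ (k + 1) - 1), by omega⟩
      have : (X 0 ^ i * X 1 ^ 0 : RR) = X 0 ^ m * X 1 ^ 0 * (qa (k + 1) + X 0 ^ (2 ^ (k + 1) - 1))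
          - X 0 ^ m * qa (k + 1) := by
        rw [hm]; ring
      rw [this]
      refine Ideal.sub_mem _ (W_mul m 0 _ ?_ (lead (k + 1)).1) (Ideal.mul_mem_left _ _ ma)
      intro i' j' _ _
      exact key _ _ (by omega) (by omega)
    · exact key i j hj h

noncomputable def ev : RR →ₐ[ZMod 2] Polynomial (ZMod 2) := aeval ![Polynomial.X, 0, 0]

theorem ev0 : ev (X 0) = Polynomial.X := by simp [ev]
theorem ev1 : ev (X 1) = 0 := by simp [ev]

theorem ev_b (k : ℕ) : ev (qb k) = 0 := by
  cases k with
  | zero => simp [qb_zero]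
  | succ k => simp [qb_succ, ev1]

theorem ev_a (k : ℕ) : ev (qa k) = Polynomial.X ^ (2 ^ k - 1) := by
  induction k with
  | zero => simp [qa_zero]
  | succ k ih =>
    have hp : 1 ≤ 2 ^ k := Nat.one_le_two_pow
    have e1 : 2 ^ (k + 1) = 2 * 2 ^ k := by ring
    rw [qa_succ, map_add, map_pow, ev_b, map_mul, map_pow, ev0, ih,
      show 2 ^ (k + 1) - 1 = 1 + (2 ^ k - 1) * 2 by omega]
    ring

theorem relprime (k : ℕ) : IsRelPrime (qa k) (qb k) := by
  induction k with
  | zero => rw [qa_zero]; exact isRelPrime_one_left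
  | succ k ih =>
    have hy : IsRelPrime (qa (k + 1)) (X 1) := by
      have : Irreducible (X 1 : RR) := (MvPolynomial.X_prime).irreducible
      refine IsRelPrime.symm ((Irreducible.isRelPrime_iff_not_dvd this).2 ?_)
      rintro ⟨c, hc⟩
      have := congrArg ev hc
      rw [ev_a, map_mul, ev1, zero_mul] at this
      exact pow_ne_zero _ Polynomial.X_ne_zero this
    rw [qb_succ]
    refine IsRelPrime.mul_right hy ?_
    rw [qa_succ]
    exact IsRelPrime.add_mul_right_left (ih.symm.pow) _

theorem not_mem (k : ℕ) (hk : 1 ≤ k) : (X 0 : RR) ^ (2 ^ (k + 1) - 4) ∉ J k := by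
  obtain ⟨k, rfl⟩ : ∃ l, k = l + 1 := ⟨k - 1, by omega⟩
  intro h
  obtain ⟨P, Q, hPQ⟩ := Ideal.mem_span_pair.mp h
  have hp : 1 ≤ 2 ^ k := Nat.one_le_two_pow
  have e1 : 2 ^ (k + 1) = 2 * 2 ^ k := by ring
  have e2 : 2 ^ (k + 1 + 1) = 4 * 2 ^ k := by ring
  have sq : ∀ f : RR, pderiv 0 (f ^ 2) = 0 := by
    intro f
    rw [Derivation.leibniz_pow]
    simp [two_RR]
  have hd := congrArg (pderiv (0 : Fin 3)) hPQ
  rw [qa_succ, qb_succ, show 2 ^ (k + 1 + 1) - 4 = (2 ^ (k + 1) - 2) * 2 by omega, pow_mul,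
    sq] at hd
  simp only [map_add, Derivation.leibniz, sq, smul_eq_mul, pderiv_X_self,
    pderiv_X_of_ne (show (1 : Fin 3) ≠ 0 by decide)] at hd
  set P' := pderiv (0 : Fin 3) P
  set Q' := pderiv (0 : Fin 3) Q
  have hdv : qa k ^ 2 ∣ P' * qb k ^ 2 := by
    refine ⟨-(P + X 0 * P' + X 1 * Q'), ?_⟩
    linear_combination hd
  have hdv2 : qa k ^ 2 ∣ P' := (relprime k).pow.dvd_of_dvd_mul_right hdv
  obtain ⟨S, hS⟩ := hdv2
  have ha0 : qa k ^ 2 ≠ 0 := by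
    apply pow_ne_zero
    intro h0
    have := ev_a k
    rw [h0, map_zero] at this
    exact pow_ne_zero _ Polynomial.X_ne_zero this.symm
  have hP : P = - (S * qa (k + 1) + X 1 * Q') := by
    apply mul_left_cancel₀ ha0
    rw [qa_succ]
    rw [hS] at hd
    linear_combination hd
  have := congrArg ev hPQ
  rw [hP] at this
  simp only [map_add, map_mul, map_neg, ev_a, ev_b, ev1, ev0, map_pow] at this
  have hdvd : (Polynomial.X : Polynomial (ZMod 2)) ^ ((2 ^ (k + 1) - 1) * 2) ∣
      Polynomial.X ^ (2 ^ (k + 1 + 1) - 4) := by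
    refine ⟨- ev S, ?_⟩
    rw [← this]; ring
  rw [pow_dvd_pow_iff Polynomial.X_ne_zero Polynomial.not_isUnit_X] at hdvd
  omega

section
variable {A : Type} [CommRing A] [Algebra (ZMod 2) A] (π : RR →ₐ[ZMod 2] A)

noncomputable def ph : RR →ₐ[ZMod 2] Polynomial A :=
  aeval ![Polynomial.C (π (X 0)), Polynomial.C (π (X 1)), Polynomial.X]

theorem ph0 : ph π (X 0) = Polynomial.C (π (X 0)) := by simp [ph]
theorem ph1 : ph π (X 1) = Polynomial.C (π (X 1)) := by simp [ph]
theorem ph2 : ph π (X 2) = Polynomial.X := by simp [ph]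

theorem ph_ab (k : ℕ) : ph π (qa k) = Polynomial.C (π (qa k)) ∧
    ph π (qb k) = Polynomial.C (π (qb k)) := by
  induction k with
  | zero => simp [qa_zero, qb_zero]
  | succ k ih =>
    simp only [qa_succ, qb_succ, map_add, map_mul, map_pow, ih.1, ih.2, ph0, ph1, and_self]

theorem ph_c [Nontrivial A] (k : ℕ) : (ph π (qc (k + 1))).Monic ∧
    (ph π (qc (k + 1))).natDegree = 2 ^ k - 1 := by
  induction k with
  | zero => simp [qc_one]
  | succ k ih =>
    have hp : 1 ≤ 2 ^ k := Nat.one_le_two_pow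
    have e1 : 2 ^ (k + 1) = 2 * 2 ^ k := by ring
    obtain ⟨h1, h2⟩ := ih
    rw [qc_succ]
    simp only [map_add, map_mul, map_pow, ph2, (ph_ab π _).1]
    set c := ph π (qc (k + 1))
    have hm : (Polynomial.X * c ^ 2).Monic := Polynomial.monic_X.mul (h1.pow 2)
    have hn : (Polynomial.X * c ^ 2).natDegree = 2 ^ (k + 1) - 1 := by
      rw [Polynomial.monic_X.natDegree_mul (h1.pow 2), h1.natDegree_pow, h2,
        Polynomial.natDegree_X]
      omega
    rw [← Polynomial.C_pow]
    constructor
    · rw [add_comm]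
      refine hm.add_of_left ?_
      refine lt_of_le_of_lt Polynomial.degree_C_le ?_
      rw [← Polynomial.natDegree_pos_iff_degree_pos, hn]
      omega
    · rw [Polynomial.natDegree_C_add, hn]

theorem not_mem_A (l : ℕ) (hl : 2 ≤ l) (m : ℕ) (h1 : π (qa (l + 1)) = 0)
    (h2 : π (qb (l + 1)) = 0) (hz : π (X 0 ^ m) ≠ 0) :
    (X 2 ^ 2 * X 0 ^ m : RR) ∉ Ideal.span {qa (l + 1), qb (l + 1), X 2 * qc (l + 1)} := by
  intro h
  have : Nontrivial A := ⟨_, _, hz⟩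
  obtain ⟨p, f, hf, hpf⟩ := Ideal.mem_span_insert.mp h
  obtain ⟨q, r, hqr⟩ := Ideal.mem_span_pair.mp hf
  have h' : Polynomial.X * ph π (qc (l + 1)) ∣ ph π (X 2 ^ 2 * X 0 ^ m) := by
    refine ⟨ph π r, ?_⟩
    rw [hpf, ← hqr]
    simp only [map_add, map_mul, ph2, (ph_ab π _).1, (ph_ab π _).2, h1, h2, map_zero, mul_zero,
      zero_add]
    rw [mul_comm]
  obtain ⟨hm, hn⟩ := ph_c π l
  have hm' := Polynomial.monic_X.mul hm
  have hn' := Polynomial.monic_X.natDegree_mul hm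
  rw [hn, Polynomial.natDegree_X] at hn'
  have h4 : 2 ^ 2 ≤ 2 ^ l := Nat.pow_le_pow_right (by norm_num) (by omega)
  simp only [map_mul, map_pow, ph0, ph2] at h'
  rw [← map_pow, ← map_pow, mul_comm (Polynomial.X ^ 2)] at h'
  refine hm'.not_dvd_of_natDegree_lt ?_ ?_ h'
  · rw [Polynomial.C_mul_X_pow_eq_monomial, Ne, Polynomial.monomial_eq_zero_iff]
    exact hz
  · rw [hn', Polynomial.natDegree_C_mul_X_pow _ _ hz]
    omega

end

theorem not_mem_K (k : ℕ) (hk : 3 ≤ k) :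
    (X 2 ^ 2 * X 0 ^ (2 ^ (k + 1) - 4) : RR) ∉ Ideal.span {qa k, qb k, X 2 * qc k} := by
  have hne := not_mem k (by omega)
  obtain ⟨l, rfl⟩ : ∃ l, k = l + 1 := ⟨k - 1, by omega⟩
  refine not_mem_A (Ideal.Quotient.mkₐ (ZMod 2) (J (l + 1))) l (by omega) _ ?_ ?_ ?_
  · exact Ideal.Quotient.eq_zero_iff_mem.2 (Ideal.subset_span (by simp))
  · exact Ideal.Quotient.eq_zero_iff_mem.2 (Ideal.subset_span (by simp))
  · exact fun h => hne (Ideal.Quotient.eq_zero_iff_mem.1 h)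

theorem I4_anti (n : ℤ) (hn : 0 ≤ n) : I4 (n + 1) ≤ I4 n := by
  have m0 : g4 (n - 3) ∈ I4 n := Ideal.subset_span (by simp)
  have m1 : g4 (n - 2) ∈ I4 n := Ideal.subset_span (by simp)
  have m2 : g4 (n - 1) ∈ I4 n := Ideal.subset_span (by simp)
  have m3 : g4 n ∈ I4 n := Ideal.subset_span (by simp)
  rw [I4, Ideal.span_le]
  rintro f (rfl | rfl | rfl | rfl)
  · rwa [show n + 1 - 3 = n - 2 by ring]
  · rwa [show n + 1 - 2 = n - 1 by ring]
  · rwa [show n + 1 - 1 = n by ring]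
  · rw [g4_rec _ (by omega), show n + 1 - 2 = n - 1 by ring, show n + 1 - 3 = n - 2 by ring,
      show n + 1 - 4 = n - 3 by ring]
    exact Ideal.add_mem _ (Ideal.add_mem _ (Ideal.mul_mem_left _ _ m2)
      (Ideal.mul_mem_left _ _ m1)) (Ideal.mul_mem_left _ _ m0)

theorem low (k : ℕ) (hk : 3 ≤ k) : (X 0 : RR) ^ (2 ^ (k + 1) - 4) ∉ I4 (2 ^ (k + 1) - 2) := by
  intro h
  apply not_mem_K k hk
  set K : Ideal RR := Ideal.span {qa k, qb k, X 2 * qc k} with hK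
  have ma : qa k ∈ K := Ideal.subset_span (by simp)
  have mb : qb k ∈ K := Ideal.subset_span (by simp)
  have mc : X 2 * qc k ∈ K := Ideal.subset_span (by simp)
  have hp : (1 : ℤ) ≤ 2 ^ k := one_le_pow₀ (by norm_num)
  have e1 : (2 : ℤ) ^ (k + 1) = 2 * 2 ^ k := by ring
  have hb : qb k = X 1 * qc k + X 2 * g4 (2 ^ (k + 1) - 5) := by
    rw [qb, g4_rec _ (by omega), show (2 ^ (k + 1) - 1 - 2 : ℤ) = 2 ^ (k + 1) - 3 by ring,
      show (2 ^ (k + 1) - 1 - 3 : ℤ) = 2 ^ (k + 1) - 4 by ring,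
      show (2 ^ (k + 1) - 1 - 4 : ℤ) = 2 ^ (k + 1) - 5 by ring, qz, qc]
    ring
  rw [I4] at h
  refine Submodule.span_induction ?_ ?_ ?_ ?_ h
  · rintro f (rfl | rfl | rfl | rfl)
    · rw [show (2 ^ (k + 1) - 2 - 3 : ℤ) = 2 ^ (k + 1) - 5 by ring,
        show X 2 ^ 2 * g4 (2 ^ (k + 1) - 5) = X 2 * qb k - X 1 * (X 2 * qc k) by rw [hb]; ring]
      exact Ideal.sub_mem _ (Ideal.mul_mem_left _ _ mb) (Ideal.mul_mem_left _ _ mc)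
    · rw [show (2 ^ (k + 1) - 2 - 2 : ℤ) = 2 ^ (k + 1) - 4 by ring, sq, mul_assoc]
      exact Ideal.mul_mem_left _ _ mc
    · rw [show (2 ^ (k + 1) - 2 - 1 : ℤ) = 2 ^ (k + 1) - 3 by ring, qz]
      simp
    · exact Ideal.mul_mem_left _ _ ma
  · simp
  · intro f g _ _ hf hg
    rw [mul_add]; exact K.add_mem hf hg
  · intro r f _ hf
    rw [smul_eq_mul, mul_left_comm]; exact K.mul_mem_left _ hf

theorem high (k : ℕ) : (X 0 : RR) ^ (2 ^ (k + 1) - 3) ∈ I4 (2 ^ (k + 1) + 1) := by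
  have h := big_mem k (2 ^ (k + 1) - 3) 0 (by omega)
  rw [pow_zero, mul_one] at h
  refine (?_ : J k ≤ _) h
  rw [J, Ideal.span_le]
  rintro f (rfl | rfl)
  · refine Ideal.subset_span (Or.inl ?_)
    rw [qa]; congr 1; ring
  · refine Ideal.subset_span (Or.inr (Or.inl ?_))
    rw [qb]; congr 1; ring

/-- Theorem 3.1(1): for `t ≥ 4` and `n ∈ {2^t-2, 2^t-1, 2^t, 2^t+1}`, the image of `w_2`
in `F_2[w_2,w_3,w_4]/I_{n,4}` has height exactly `2^t - 4`, i.e.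
`w_2^{2^t-4} ∉ I_{n,4}` and `w_2^{2^t-3} ∈ I_{n,4}`. -/
theorem stmt5 (t : ℕ) (ht : 4 ≤ t) (n : ℤ)
    (hn : n = 2 ^ t - 2 ∨ n = 2 ^ t - 1 ∨ n = 2 ^ t ∨ n = 2 ^ t + 1) :
    (X 0 : MvPolynomial (Fin 3) (ZMod 2)) ^ (2 ^ t - 4) ∉ I4 n ∧
      (X 0 : MvPolynomial (Fin 3) (ZMod 2)) ^ (2 ^ t - 3) ∈ I4 n := by
  obtain ⟨k, rfl⟩ : ∃ k, t = k + 1 := ⟨t - 1, by omega⟩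
  have hp : (1 : ℤ) ≤ 2 ^ k := one_le_pow₀ (by norm_num)
  have e1 : (2 : ℤ) ^ (k + 1) = 2 * 2 ^ k := by ring
  have hl := low k (by omega)
  have hh := high k
  have i1 := I4_anti (2 ^ (k + 1) - 2) (by omega)
  have i2 := I4_anti (2 ^ (k + 1) - 1) (by omega)
  have i3 := I4_anti (2 ^ (k + 1)) (by omega)
  rw [show (2 ^ (k + 1) - 2 + 1 : ℤ) = 2 ^ (k + 1) - 1 by ring] at i1
  rw [show (2 ^ (k + 1) - 1 + 1 : ℤ) = 2 ^ (k + 1) by ring] at i2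
  rcases hn with rfl | rfl | rfl | rfl
  · exact ⟨hl, i1 (i2 (i3 hh))⟩
  · exact ⟨fun h => hl (i1 h), i2 (i3 hh)⟩
  · exact ⟨fun h => hl (i1 (i2 h)), i3 hh⟩
  · exact ⟨fun h => hl (i1 (i2 (i3 h))), hh⟩
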